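/- Let f : X → Y be a map of retractive spaces over B. Assume the sections i_X, i_Y are h-cofibrations, the projections p_X, p_Y are Hurewicz fibrations, and f is a homotopy equivalence of total spaces. Then f is a fiberwise based homotopy equivalence: there is a map g : Y → X of retractive spaces over B such that g ∘ f and f ∘ g are homotopic to the respective identities through maps of retractive spaces over B. -/

import Mathlib

open unitInterval Topology

/-- A continuous map `p : X → B` is a *Hurewicz fibration* if the map
`C([0,1],X) → X ×_B C([0,1],B)`, `γ ↦ (γ 0, p ∘ γ)`, admits a continuous section, i.e. there
is a continuous path-lifting function. -/
def IsHurewiczFibration {X B : Type*} [TopologicalSpace X] [TopologicalSpace B]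
    (p : C(X, B)) : Prop :=
  ∃ s : C({q : X × C(I, B) // p q.1 = q.2 0}, C(I, X)),
    ∀ q : {q : X × C(I, B) // p q.1 = q.2 0},
      s q 0 = q.1.1 ∧ ∀ t : I, p (s q t) = q.1.2 t

/-- A continuous map `i : X → Y` is an *h-cofibration* if it is a closed embedding and
`(Y × {0}) ∪ (i(X) × [0,1])` is a retract of `Y × [0,1]`. -/
def IsHCofibration {X Y : Type*} [TopologicalSpace X] [TopologicalSpace Y]
    (i : C(X, Y)) : Prop :=
  IsClosedEmbedding (⇑i) ∧
  ∃ r : C(Y × I, Y × I),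
    (∀ z : Y × I, (r z).2 = 0 ∨ (r z).1 ∈ Set.range ⇑i) ∧
    ∀ z : Y × I, (z.2 = 0 ∨ z.1 ∈ Set.range ⇑i) → r z = z

/-- A map `i : X → Y` of spaces over `B` (where `pY : Y → B` is the structure map of `Y`)
is an *f-cofibration over `B`* if it is a closed embedding and `(Y × {0}) ∪ (i(X) × [0,1])`
is a retract of `Y × [0,1]` via a retraction commuting with the projections to `B`. -/
def IsFCofibration {X Y B : Type*} [TopologicalSpace X] [TopologicalSpace Y]
    [TopologicalSpace B] (i : C(X, Y)) (pY : C(Y, B)) : Prop :=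
  IsClosedEmbedding (⇑i) ∧
  ∃ r : C(Y × I, Y × I),
    (∀ z : Y × I, (r z).2 = 0 ∨ (r z).1 ∈ Set.range ⇑i) ∧
    (∀ z : Y × I, (z.2 = 0 ∨ z.1 ∈ Set.range ⇑i) → r z = z) ∧
    ∀ z : Y × I, pY (r z).1 = pY z.1

/-- A continuous map is a homotopy equivalence if it admits a two-sided homotopy inverse. -/
def IsHomotopyEquiv {X Y : Type*} [TopologicalSpace X] [TopologicalSpace Y]
    (f : C(X, Y)) : Prop :=
  ∃ g : C(Y, X), (g.comp f).Homotopic (ContinuousMap.id X) ∧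
    (f.comp g).Homotopic (ContinuousMap.id Y)

/-!
Replace `f : X → Y` by the fibration `q : N → Y` sending a path in a fiber of `Y` that starts at
`f x` to its endpoint.  The map `q` is again a homotopy equivalence, and an acyclic Hurewicz
fibration has the right lifting property with respect to h-cofibrations.  Lifting the identity of
`Y` along `q`, relative to the constant paths over the image of `i_Y`, gives at once a right inverse
`g` of `f` and a homotopy `f ∘ g ≃ id`, both compatible with sections and projections.  The same
argument applied to `g` makes `g` invertible on both sides.

The lifting property rests on Strøm's observation that fibrations lift against the inclusion of a
strong deformation retract `S` that is the zero set of a function `φ`: run the deformation of `w` in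
time `φ w`, lift the resulting path and stop at time `φ w`, so that no time passes on `S`.
-/

section Gluing

variable {E W Z : Type*} [TopologicalSpace E] [TopologicalSpace W] [TopologicalSpace Z]

theorem continuousOn_range_of_isInducing {e : Z → W} (he : IsInducing e) {F : W → E}
    (hF : Continuous (F ∘ e)) : ContinuousOn F (Set.range e) := by
  rintro _ ⟨z, rfl⟩
  rw [ContinuousWithinAt, ← he.map_nhds_eq]
  exact hF.continuousAt

theorem continuousOn_extend_union_range {e : Z → W} (he : IsClosedEmbedding e) {T : Set W}
    (hT : IsClosed T) {u : Z → E} {v : W → E} (hu : Continuous u) (hv : ContinuousOn v T)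
    (huv : ∀ z, e z ∈ T → u z = v (e z)) :
    Set.EqOn (Function.extend e u v) v T ∧
      ContinuousOn (Function.extend e u v) (T ∪ Set.range e) := by
  have hT_eq : Set.EqOn (Function.extend e u v) v T := fun w hw => by
    by_cases hwe : ∃ z, e z = w
    · obtain ⟨z, rfl⟩ := hwe
      rw [he.injective.extend_apply, huv z hw]
    · exact Function.extend_apply' u v w hwe
  have hrange : ContinuousOn (Function.extend e u v) (Set.range e) :=
    continuousOn_range_of_isInducing he.isInducing <| by
      rwa [Function.extend_comp he.injective]
  exact ⟨hT_eq, (hv.congr hT_eq).union_of_isClosed hrange hT he.isClosed_range⟩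

end Gluing

section StrongDeformationRetract

variable {B E W X Y Z : Type*} [TopologicalSpace B] [TopologicalSpace E] [TopologicalSpace W]
  [TopologicalSpace X] [TopologicalSpace Y] [TopologicalSpace Z]

/-- `S` is the zero set of a function to `[0,1]` and a strong deformation retract of `W`: Strøm's
criterion for the inclusion of `S` to have the left lifting property against all Hurewicz
fibrations. -/
structure IsZeroSetDeformationRetract (S : Set W) : Prop where
  exists_eq_zero_iff : ∃ φ : C(W, I), ∀ w, φ w = 0 ↔ w ∈ S
  exists_homotopicRel_id : ∃ r : C(W, W), (∀ w, r w ∈ S) ∧ r.HomotopicRel (.id W) S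

theorem continuous_homotopy_div (H : C(I × W, Z)) (φ : C(W, ℝ))
    (hH : ∀ w, φ w = 0 → ∀ s, H (s, w) = H (0, w)) :
    Continuous fun z : W × ℝ => H (Set.projIcc 0 1 zero_le_one (z.2 / φ z.1), z.1) := by
  rw [continuous_iff_continuousAt]
  rintro ⟨w, t⟩
  by_cases hw : φ w = 0
  · intro U hU
    have hU : U ∈ 𝓝 (H (0, w)) := hH w hw _ ▸ hU
    have near : ∀ᶠ w' in 𝓝 w, ∀ s ∈ (Set.univ : Set I), H (s, w') ∈ U :=
      isCompact_univ.eventually_forall_of_forall_eventually fun s _ =>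
        (H.continuous.comp continuous_swap).continuousAt.eventually_mem <| by
          rwa [Function.comp_apply, Prod.swap_prod_mk, hH w hw]
    exact (continuousAt_fst.eventually near).mono fun _ hz => hz _ trivial
  · have hdiv : ContinuousAt (fun z : W × ℝ => z.2 / φ z.1) (w, t) :=
      continuousAt_snd.div (by fun_prop) hw
    exact H.continuous.continuousAt.comp
      ((continuous_projIcc.continuousAt.comp hdiv).prodMk continuousAt_fst)

theorem IsZeroSetDeformationRetract.exists_deformation_in_time {S : Set W}
    (hS : IsZeroSetDeformationRetract S) :
    ∃ (φ : C(W, I)) (Γ : C(W × I, W)), (∀ w ∈ S, φ w = 0) ∧ (∀ w, Γ (w, 0) ∈ S) ∧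
      ∀ w, Γ (w, φ w) = w := by
  obtain ⟨⟨φ, hφ⟩, r, hr, ⟨D⟩⟩ := hS
  let φ' : C(W, ℝ) := ⟨fun w => φ w, by fun_prop⟩
  have stationary : ∀ w, φ' w = 0 → ∀ s, D (s, w) = w := fun w hw s =>
    D.eq_snd s ((hφ w).1 (Subtype.ext hw))
  have hcont := continuous_homotopy_div D.toContinuousMap φ' fun w hw s =>
    (stationary w hw s).trans (stationary w hw 0).symm
  refine ⟨φ, ⟨fun z => D (Set.projIcc 0 1 zero_le_one (z.2 / φ z.1), z.1),
    hcont.comp (by fun_prop : Continuous fun z : W × I => (z.1, (z.2 : ℝ)))⟩,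
    fun w hw => (hφ w).2 hw, fun w => ?_, fun w => ?_⟩
  · simpa using hr w
  · by_cases hw : φ' w = 0
    · exact stationary w hw _
    · have hdiv : (φ w : ℝ) / φ w = 1 := div_self hw
      simp [hdiv]

theorem IsHurewiczFibration.exists_homotopy_lift {p : C(E, B)} (hp : IsHurewiczFibration p)
    (g : C(X, E)) (h : C(X × I, B)) (hgh : ∀ x, p (g x) = h (x, 0)) :
    ∃ k : C(X × I, E), (∀ z, p (k z) = h z) ∧ ∀ x, k (x, 0) = g x := by
  obtain ⟨s, hs⟩ := hp
  let problem : C(X, {q : E × C(I, B) // p q.1 = q.2 0}) :=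
    ⟨fun x => ⟨(g x, h.curry x), hgh x⟩, by fun_prop⟩
  exact ⟨(s.comp problem).uncurry, fun z => (hs (problem z.1)).2 z.2,
    fun x => (hs (problem x)).1⟩

theorem IsHurewiczFibration.exists_lift_extending_of_deformationRetract {p : C(E, B)}
    (hp : IsHurewiczFibration p) {S : Set W} (hS : IsZeroSetDeformationRetract S) {g : W → E}
    (hg : ContinuousOn g S) (h : C(W, B)) (hgh : ∀ w ∈ S, p (g w) = h w) :
    ∃ k : C(W, E), (∀ w, p (k w) = h w) ∧ Set.EqOn k g S := by
  obtain ⟨φ, Γ, hφ, hΓ0, hΓφ⟩ := hS.exists_deformation_in_time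
  obtain ⟨k, hk, hk0⟩ := hp.exists_homotopy_lift
    ⟨fun w => g (Γ (w, 0)), hg.comp_continuous (by fun_prop) hΓ0⟩ (h.comp Γ)
    fun w => hgh _ (hΓ0 w)
  refine ⟨⟨fun w => k (w, φ w), by fun_prop⟩, fun w => ?_, fun w hw => ?_⟩
  · exact (hk _).trans (congrArg h (hΓφ w))
  · calc k (w, φ w) = g (Γ (w, φ w)) := by rw [hφ w hw, hk0]; rfl
      _ = g w := by rw [hΓφ]

end StrongDeformationRetract

section Cofibration

variable {A B E X Y : Type*} [TopologicalSpace A] [TopologicalSpace B] [TopologicalSpace E]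
  [TopologicalSpace X] [TopologicalSpace Y]

/- If `r` is the retraction of the cylinder, then `x` lies in the closed set `range i` iff the
height of `r (x, t)` is `t` for all `t`; the function is the sup distance between these two
heights. -/
theorem IsHCofibration.exists_eq_zero_iff {i : C(A, X)} (hi : IsHCofibration i) :
    ∃ φ : C(X, I), ∀ x, φ x = 0 ↔ x ∈ Set.range i := by
  obtain ⟨hi, r, hr, hfix⟩ := hi
  let height : C(X, C(I, I)) := ContinuousMap.curry ⟨fun z => (r z).2, by fun_prop⟩
  have dist_le_one : ∀ x, dist (height x) (.id I) ≤ 1 := fun x =>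
    (ContinuousMap.dist_le zero_le_one).2 fun t =>
      Real.dist_le_of_mem_Icc_01 (height x t).2 t.2
  refine ⟨⟨fun x => ⟨dist (height x) (.id I), dist_nonneg, dist_le_one x⟩, by fun_prop⟩,
    fun x => ?_⟩
  rw [ContinuousMap.coe_mk, ← Subtype.coe_inj, Set.Icc.coe_zero, dist_eq_zero,
    ContinuousMap.ext_iff]
  refine ⟨fun h => ?_, fun hx t => congrArg Prod.snd (hfix (x, t) (.inr hx))⟩
  have hclosed : IsClosed {t : I | (r (x, t)).1 ∈ Set.range i} :=
    hi.isClosed_range.preimage (by fun_prop)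
  have hpos : {0}ᶜ ⊆ {t : I | (r (x, t)).1 ∈ Set.range i} := fun t ht =>
    (hr (x, t)).resolve_left fun h0 => ht ((h t).symm.trans h0)
  have hzero : (r (x, 0)).1 ∈ Set.range i :=
    hclosed.closure_subset_iff.2 hpos (dense_compl_singleton 0 0)
  rwa [hfix (x, 0) (.inl rfl)] at hzero

theorem IsHCofibration.isZeroSetDeformationRetract_cylinder {i : C(A, X)}
    (hi : IsHCofibration i) :
    IsZeroSetDeformationRetract {z : X × I | z.2 = 0 ∨ z.1 ∈ Set.range i} := by
  obtain ⟨φ, hφ⟩ := hi.exists_eq_zero_iff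
  obtain ⟨-, r, hr, hfix⟩ := hi
  refine ⟨⟨⟨fun z => z.2 * φ z.1, by fun_prop⟩, fun z => ?_⟩, r, hr, ⟨⟨⟨⟨fun w =>
    ((r (w.2.1, σ w.1 * w.2.2)).1, Set.Icc.convexComb (r w.2).2 w.2.2 w.1), ?_⟩,
    fun z => ?_, fun z => ?_⟩, fun s z hz => ?_⟩⟩⟩
  · simp [hφ]
  · exact (by fun_prop : Continuous _).prodMk
      (Set.Icc.continuous_convexComb_prod.comp
        (by fun_prop : Continuous fun w : I × (X × I) => ((r w.2).2, w.2.2, w.1)))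
  · simp
  · simp [hfix (z.1, 0) (.inl rfl)]
  · have hz' : σ s * z.2 = 0 ∨ z.1 ∈ Set.range i := hz.imp_left fun h => by rw [h, mul_zero]
    simp [hfix z hz, hfix (z.1, σ s * z.2) hz']

theorem IsHurewiczFibration.exists_relative_homotopy_lift {p : C(E, B)}
    (hp : IsHurewiczFibration p) {i : C(A, X)} (hi : IsHCofibration i) (g : C(X, E))
    (G : C(A × I, E)) (h : C(X × I, B)) (hG : ∀ a, G (a, 0) = g (i a))
    (hgh : ∀ x, p (g x) = h (x, 0)) (hGh : ∀ a t, p (G (a, t)) = h (i a, t)) :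
    ∃ k : C(X × I, E), (∀ z, p (k z) = h z) ∧ (∀ x, k (x, 0) = g x) ∧
      ∀ a t, k (i a, t) = G (a, t) := by
  let e : A × I → X × I := Prod.map i id
  have he : IsClosedEmbedding e := hi.1.prodMap .id
  obtain ⟨hbase, hcont⟩ := continuousOn_extend_union_range (T := {z : X × I | z.2 = 0})
    (v := fun z => g z.1) he (isClosed_eq continuous_snd continuous_const) G.continuous
    (by fun_prop) (by rintro ⟨a, t⟩ (rfl : t = 0); exact hG a)
  have hside : ∀ a t, Function.extend e G (fun z => g z.1) (i a, t) = G (a, t) := fun a t =>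
    he.injective.extend_apply _ _ (a, t)
  have hrange : Set.range e = {z : X × I | z.1 ∈ Set.range i} := by
    ext ⟨x, t⟩
    simp [e]
  rw [hrange] at hcont
  obtain ⟨k, hk, hkG⟩ := hp.exists_lift_extending_of_deformationRetract
    hi.isZeroSetDeformationRetract_cylinder hcont h <| by
      rintro ⟨x, t⟩ (ht | ⟨a, rfl⟩)
      · obtain rfl : t = 0 := ht
        exact (congrArg p (hbase rfl)).trans (hgh x)
      · rw [hside, hGh]
  exact ⟨k, hk, fun x => (hkG (.inl rfl)).trans (hbase rfl),
    fun a t => (hkG (.inr ⟨a, rfl⟩)).trans (hside a t)⟩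

end Cofibration

section SquareLifting

variable {B E P : Type*} [TopologicalSpace B] [TopologicalSpace E] [TopologicalSpace P]

/-- The inclusion of the two ends of the cylinder `P × [0,1]`. -/
def cylinderEnds (P : Type*) [TopologicalSpace P] : C(P ⊕ P, P × I) :=
  ⟨Sum.elim (fun n => (n, 0)) (fun n => (n, 1)), by fun_prop⟩

theorem range_cylinderEnds :
    Set.range (cylinderEnds P) = {z : P × I | z.2 = 0 ∨ z.2 = 1} := by
  ext ⟨n, u⟩
  simp [cylinderEnds, eq_comm]

theorem isClosedEmbedding_cylinderEnds : IsClosedEmbedding (cylinderEnds P) := by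
  have slice : ∀ u : I, IsClosedEmbedding fun n : P => (n, u) := fun u =>
    ⟨isEmbedding_prodMkLeft u, (isClosedMap_prodMk_right u).isClosed_range⟩
  refine (slice 0).sumElim (slice 1) ?_
  rintro (m | m) (n | n) h <;> simp_all

/- With `v = 2 u - 1`, the retraction of the square onto its three sides is
`(v, t) ↦ (v (1 + t), |v| (1 + t) - 1)`, truncated to `[-1, 1] × [0, 1]`. -/
theorem isHCofibration_cylinderEnds : IsHCofibration (cylinderEnds P) := by
  refine ⟨isClosedEmbedding_cylinderEnds, ⟨fun z => ((z.1.1,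
    Set.projIcc 0 1 zero_le_one ((z.1.2 : ℝ) + z.2 * (z.1.2 - 1 / 2))),
    Set.projIcc 0 1 zero_le_one (|2 * (z.1.2 : ℝ) - 1| * (1 + z.2) - 1)), by fun_prop⟩, ?_, ?_⟩
  all_goals rw [range_cylinderEnds]
  · rintro ⟨⟨n, u⟩, t⟩
    simp only [ContinuousMap.coe_mk, projIcc_eq_zero, projIcc_eq_one, Set.mem_ofPred_eq]
    by_contra! h
    rcases abs_cases (2 * (u : ℝ) - 1) with ⟨habs, -⟩ | ⟨habs, -⟩ <;> rw [habs] at h <;>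
      linarith [h.1, h.2.1, h.2.2]
  · rintro ⟨⟨n, u⟩, t⟩ (rfl | rfl | rfl)
    · have height : |2 * (u : ℝ) - 1| ≤ 1 := abs_le.2 ⟨by linarith [u.2.1], by linarith [u.2.2]⟩
      simp [projIcc_eq_zero.2 (sub_nonpos.2 height)]
    · have clamped : -((t : ℝ) * 2⁻¹) ≤ 0 := by linarith [t.2.1]
      simp [projIcc_eq_zero.2 clamped]
    · have clamped : 1 ≤ 1 + (t : ℝ) * (1 - 2⁻¹) := by linarith [t.2.1]
      have height : |(2 : ℝ) - 1| = 1 := by norm_num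
      simp [projIcc_eq_one.2 clamped, height]

theorem IsHurewiczFibration.exists_square_lift {p : C(E, B)} (hp : IsHurewiczFibration p)
    (bottom left right : C(P × I, E)) (h : C((P × I) × I, B))
    (hbl : ∀ n, left (n, 0) = bottom (n, 0)) (hbr : ∀ n, right (n, 0) = bottom (n, 1))
    (hb : ∀ n u, p (bottom (n, u)) = h ((n, u), 0))
    (hl : ∀ n t, p (left (n, t)) = h ((n, 0), t))
    (hr : ∀ n t, p (right (n, t)) = h ((n, 1), t)) :
    ∃ k : C((P × I) × I, E), (∀ z, p (k z) = h z) ∧ (∀ n u, k ((n, u), 0) = bottom (n, u)) ∧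
      (∀ n t, k ((n, 0), t) = left (n, t)) ∧ ∀ n t, k ((n, 1), t) = right (n, t) := by
  let sides : C((P ⊕ P) × I, E) :=
    ContinuousMap.uncurry ⟨Sum.elim left.curry right.curry, by fun_prop⟩
  obtain ⟨k, hk, hkb, hks⟩ := hp.exists_relative_homotopy_lift isHCofibration_cylinderEnds bottom
    sides h (Sum.rec hbl hbr) (fun z => hb z.1 z.2) (Sum.rec hl hr)
  exact ⟨k, hk, fun n u => hkb (n, u), fun n => hks (.inl n), fun n => hks (.inr n)⟩

end SquareLifting

section HomotopyEquiv

variable {X Y Z : Type*} [TopologicalSpace X] [TopologicalSpace Y] [TopologicalSpace Z]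

theorem IsHomotopyEquiv.comp {f : C(X, Y)} {g : C(Y, Z)} (hg : IsHomotopyEquiv g)
    (hf : IsHomotopyEquiv f) : IsHomotopyEquiv (g.comp f) := by
  obtain ⟨f', hf'f, hff'⟩ := hf
  obtain ⟨g', hg'g, hgg'⟩ := hg
  let e : ContinuousMap.HomotopyEquiv X Z :=
    (ContinuousMap.HomotopyEquiv.mk f f' hf'f hff').trans ⟨g, g', hg'g, hgg'⟩
  exact ⟨e.invFun, e.left_inv, e.right_inv⟩

theorem IsHomotopyEquiv.of_homotopic {f f' : C(X, Y)} (hf : IsHomotopyEquiv f)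
    (h : f.Homotopic f') : IsHomotopyEquiv f' := by
  obtain ⟨g, hgf, hfg⟩ := hf
  exact ⟨g, ((ContinuousMap.Homotopic.refl g).comp h.symm).trans hgf,
    (h.symm.comp (.refl g)).trans hfg⟩

theorem IsHomotopyEquiv.of_rightInverse {f : C(X, Y)} (hf : IsHomotopyEquiv f) {g : C(Y, X)}
    (hfg : (f.comp g).Homotopic (.id Y)) : IsHomotopyEquiv g := by
  obtain ⟨g₀, hg₀f, hfg₀⟩ := hf
  have hg₀g : g₀.Homotopic g :=
    ((ContinuousMap.Homotopic.refl g₀).comp hfg).symm.trans (hg₀f.comp (.refl g))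
  exact IsHomotopyEquiv.of_homotopic ⟨f, hfg₀, hg₀f⟩ hg₀g

end HomotopyEquiv

section AcyclicFibration

variable {A B E X : Type*} [TopologicalSpace A] [TopologicalSpace B] [TopologicalSpace E]
  [TopologicalSpace X]

theorem IsHurewiczFibration.exists_homotopic_comp_eq {q : C(E, B)} (hq : IsHurewiczFibration q)
    {g : C(X, E)} {h : C(X, B)} (hgh : (q.comp g).Homotopic h) :
    ∃ g' : C(X, E), g.Homotopic g' ∧ q.comp g' = h := by
  obtain ⟨K⟩ := hgh
  obtain ⟨k, hk, hk0⟩ := hq.exists_homotopy_lift g ⟨fun z => K (z.2, z.1), by fun_prop⟩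
    fun x => (K.apply_zero x).symm
  refine ⟨⟨fun x => k (x, 1), by fun_prop⟩,
    ⟨⟨⟨fun z => k (z.2, z.1), by fun_prop⟩, hk0, fun _ => rfl⟩⟩, ?_⟩
  ext x
  exact (hk _).trans (K.apply_one x)

/- For a homotopy `Φ` from `s ∘ q` to the identity, the paths `s ∘ q ∘ Φ` and `Φ` ending at
`s (q e)` and `e` lie over the same path in `B`; the top side of a square with these as vertical
sides joins their endpoints in a fiber. -/
theorem IsHurewiczFibration.homotopicWith_section_comp {q : C(E, B)} (hq : IsHurewiczFibration q)
    {s : C(B, E)} (hs : q.comp s = .id B) (hsq : (s.comp q).Homotopic (.id E)) :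
    (s.comp q).HomotopicWith (.id E) (fun e => q.comp e = q) := by
  obtain ⟨Φ⟩ := hsq
  have hqs : ∀ b, q (s b) = b := DFunLike.congr_fun hs
  have hΦ0 : ∀ e, Φ (0, e) = s (q e) := Φ.apply_zero
  have hΦ1 : ∀ e, Φ (1, e) = e := Φ.apply_one
  obtain ⟨Θ, hΘ, -, hΘl, hΘr⟩ := hq.exists_square_lift
    (⟨fun z => s (q z.1), by fun_prop⟩ : C(E × I, E))
    ⟨fun z => s (q (Φ (z.2, z.1))), by fun_prop⟩ ⟨fun z => Φ (z.2, z.1), by fun_prop⟩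
    ⟨fun z => q (Φ (z.2, z.1.1)), by fun_prop⟩
    (fun e => by simp [hΦ0, hqs]) hΦ0 (fun e u => by simp [hΦ0]) (fun e t => by simp [hqs])
    (fun _ _ => rfl)
  refine ⟨⟨⟨⟨fun z => Θ ((z.2, z.1), 1), by fun_prop⟩, fun e => ?_, fun e => ?_⟩, fun t => ?_⟩⟩
  · simp [hΘl, hΦ1]
  · simp [hΘr, hΦ1]
  · ext e
    simp [hΘ, hΦ1]

theorem IsHurewiczFibration.exists_section_of_isHomotopyEquiv {q : C(E, B)}
    (hq : IsHurewiczFibration q) (he : IsHomotopyEquiv q) :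
    ∃ s : C(B, E), q.comp s = .id B ∧
      (s.comp q).HomotopicWith (.id E) (fun e => q.comp e = q) := by
  obtain ⟨s', hs'q, hqs'⟩ := he
  obtain ⟨s, hs's, hqs⟩ := hq.exists_homotopic_comp_eq hqs'
  exact ⟨s, hqs, hq.homotopicWith_section_comp hqs ((hs's.symm.comp (.refl q)).trans hs'q)⟩

theorem IsHurewiczFibration.exists_lift_extending_of_isHCofibration {q : C(E, B)}
    (hq : IsHurewiczFibration q) (he : IsHomotopyEquiv q) {i : C(A, X)} (hi : IsHCofibration i)
    (τ : C(A, E)) (h : C(X, B)) (hτ : ∀ a, q (τ a) = h (i a)) :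
    ∃ k : C(X, E), (∀ x, q (k x) = h x) ∧ ∀ a, k (i a) = τ a := by
  obtain ⟨s, hqs, ⟨Θ⟩⟩ := hq.exists_section_of_isHomotopyEquiv he
  have hqΘ : ∀ e t, q (Θ (t, e)) = q e := fun e t => DFunLike.congr_fun (Θ.prop t) e
  obtain ⟨k, hk, -, hkτ⟩ := hq.exists_relative_homotopy_lift hi (s.comp h)
    ⟨fun z => Θ (z.2, τ z.1), by fun_prop⟩ ⟨fun z => h z.1, by fun_prop⟩
    (fun a => (Θ.apply_zero _).trans (congrArg s (hτ a))) (fun x => DFunLike.congr_fun hqs (h x))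
    (fun a t => (hqΘ _ t).trans (hτ a))
  exact ⟨⟨fun x => k (x, 1), by fun_prop⟩, fun x => hk (x, 1),
    fun a => (hkτ a 1).trans (Θ.apply_one (τ a))⟩

end AcyclicFibration

theorem isHurewiczFibration_of_exists_homotopy_lift.{u, v} {E : Type u} {B : Type v}
    [TopologicalSpace E] [TopologicalSpace B] {p : C(E, B)}
    (hp : ∀ (P : Type max u v) [TopologicalSpace P] (g : C(P, E)) (h : C(P × I, B)),
      (∀ w, p (g w) = h (w, 0)) →
        ∃ k : C(P × I, E), (∀ z, p (k z) = h z) ∧ ∀ w, k (w, 0) = g w) :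
    IsHurewiczFibration p := by
  obtain ⟨k, hk, hk0⟩ := hp {q : E × C(I, B) // p q.1 = q.2 0} ⟨fun q => q.1.1, by fun_prop⟩
    ⟨fun z => z.1.1.2 z.2, by fun_prop⟩ fun q => q.2
  exact ⟨k.curry, fun q => ⟨hk0 q, fun t => hk (q, t)⟩⟩

section FiberwisePathSpace

variable {B P X Y : Type*} [TopologicalSpace B] [TopologicalSpace P] [TopologicalSpace X]
  [TopologicalSpace Y]

/-- The fiberwise mapping path space of `f : X → Y` over `B`: points `x` of `X` together with a path
in the fiber of `Y` over `pX x` that starts at `f x`. -/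
abbrev FiberwisePathSpace (pX : C(X, B)) (pY : C(Y, B)) (f : C(X, Y)) : Type _ :=
  {n : X × C(I, Y) // n.2 0 = f n.1 ∧ ∀ u, pY (n.2 u) = pX n.1}

namespace FiberwisePathSpace

variable {pX : C(X, B)} {pY : C(Y, B)} {f : C(X, Y)}

/-- The projection of the fiberwise mapping path space of `f : X → Y` to `X`. -/
def base : C(FiberwisePathSpace pX pY f, X) :=
  ⟨fun n => n.1.1, by fun_prop⟩

/-- Evaluation of the paths in the fiberwise mapping path space. -/
def eval : C(FiberwisePathSpace pX pY f × I, Y) :=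
  ⟨fun z => z.1.1.2 z.2, by fun_prop⟩

/-- Evaluation of the paths at their endpoints: the fibration replacing `f`. -/
def endpoint (pX : C(X, B)) (pY : C(Y, B)) (f : C(X, Y)) : C(FiberwisePathSpace pX pY f, Y) :=
  ⟨fun n => eval (n, 1), by fun_prop⟩

theorem eval_zero (n : FiberwisePathSpace pX pY f) : eval (n, 0) = f (base n) :=
  n.2.1

theorem apply_eval (n : FiberwisePathSpace pX pY f) (u : I) : pY (eval (n, u)) = pX (base n) :=
  n.2.2 u

theorem ext_base_eval {m n : FiberwisePathSpace pX pY f} (hbase : base m = base n)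
    (heval : ∀ u, eval (m, u) = eval (n, u)) : m = n :=
  Subtype.ext (Prod.ext hbase (ContinuousMap.ext heval))

/-- The map to the fiberwise mapping path space with components `x : P → X` and the family of paths
`γ`. -/
def lift (x : C(P, X)) (γ : C(P × I, Y)) (hγ : ∀ w, γ (w, 0) = f (x w))
    (hpγ : ∀ w u, pY (γ (w, u)) = pX (x w)) : C(P, FiberwisePathSpace pX pY f) :=
  ⟨fun w => ⟨(x w, γ.curry w), hγ w, hpγ w⟩, by fun_prop⟩

theorem exists_homotopy_lift_endpoint (hpX : IsHurewiczFibration pX)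
    (hpY : IsHurewiczFibration pY) (hfp : ∀ x, pY (f x) = pX x)
    (g : C(P, FiberwisePathSpace pX pY f)) (h : C(P × I, Y))
    (hgh : ∀ w, endpoint pX pY f (g w) = h (w, 0)) :
    ∃ k : C(P × I, FiberwisePathSpace pX pY f),
      (∀ z, endpoint pX pY f (k z) = h z) ∧ ∀ w, k (w, 0) = g w := by
  have hstart : ∀ w, pX (base (g w)) = pY (h (w, 0)) := fun w => by
    rw [← hgh]
    exact (apply_eval (g w) 1).symm
  obtain ⟨x, hx, hx0⟩ := hpX.exists_homotopy_lift (base.comp g) (pY.comp h) hstart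
  obtain ⟨γ, hγ, hγb, hγl, hγr⟩ := hpY.exists_square_lift
    (eval.comp (g.prodMap (.id I))) (f.comp x) h
    ⟨fun z => pY (h (z.1.1, z.2)), by fun_prop⟩
    (fun w => (congrArg f (hx0 w)).trans (eval_zero (g w)).symm) (fun w => (hgh w).symm)
    (fun w u => (apply_eval (g w) u).trans (hstart w)) (fun w t => (hfp _).trans (hx (w, t)))
    (fun _ _ => rfl)
  refine ⟨lift x ⟨fun z => γ ((z.1.1, z.2), z.1.2), by fun_prop⟩ (fun z => hγl z.1 z.2)
    (fun z u => (hγ _).trans (hx z).symm), fun z => hγr z.1 z.2, fun w => ?_⟩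
  exact ext_base_eval (hx0 w) (hγb w)

theorem isHurewiczFibration_endpoint (hpX : IsHurewiczFibration pX)
    (hpY : IsHurewiczFibration pY) (hfp : ∀ x, pY (f x) = pX x) :
    IsHurewiczFibration (endpoint pX pY f) :=
  isHurewiczFibration_of_exists_homotopy_lift fun _ _ =>
    exists_homotopy_lift_endpoint hpX hpY hfp

theorem isHomotopyEquiv_base (hfp : ∀ x, pY (f x) = pX x) :
    IsHomotopyEquiv (base : C(FiberwisePathSpace pX pY f, X)) := by
  let constantPaths : C(X, FiberwisePathSpace pX pY f) :=
    lift (.id X) ⟨fun z => f z.1, by fun_prop⟩ (fun _ => rfl) (fun x _ => hfp x)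
  let shrink : C(I × FiberwisePathSpace pX pY f, FiberwisePathSpace pX pY f) :=
    lift ⟨fun z => base z.2, by fun_prop⟩ ⟨fun z => eval (z.1.2, z.1.1 * z.2), by fun_prop⟩
      (fun z => by simp [eval_zero]) (fun z u => apply_eval z.2 _)
  refine ⟨constantPaths, ⟨⟨shrink, fun n => ?_, fun n => ?_⟩⟩, .refl _⟩
  · refine ext_base_eval rfl fun u => ?_
    change eval (n, 0 * u) = f (base n)
    rw [zero_mul, eval_zero]
  · refine ext_base_eval rfl fun u => ?_
    change eval (n, 1 * u) = eval (n, u)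
    rw [one_mul]

theorem isHomotopyEquiv_endpoint (hfp : ∀ x, pY (f x) = pX x) (hf : IsHomotopyEquiv f) :
    IsHomotopyEquiv (endpoint pX pY f) :=
  (hf.comp (isHomotopyEquiv_base hfp)).of_homotopic
    ⟨⟨⟨fun z => eval (z.2, z.1), by fun_prop⟩, eval_zero, fun _ => rfl⟩⟩

end FiberwisePathSpace

end FiberwisePathSpace

section UnderOver

variable {A B X Y Z : Type*} [TopologicalSpace A] [TopologicalSpace B] [TopologicalSpace X]
  [TopologicalSpace Y] [TopologicalSpace Z]
  {iX : C(A, X)} {pX : C(X, B)} {iY : C(A, Y)} {pY : C(Y, B)} {iZ : C(A, Z)} {pZ : C(Z, B)}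

/-- `f` is a map of spaces under `A` and over `B`.  For `A = B` and retractive spaces `X` and `Y`
these are the maps of retractive spaces. -/
structure IsMapUnderOver (iX : C(A, X)) (pX : C(X, B)) (iY : C(A, Y)) (pY : C(Y, B))
    (f : C(X, Y)) : Prop where
  apply_under : ∀ a, f (iX a) = iY a
  over_apply : ∀ x, pY (f x) = pX x

theorem IsMapUnderOver.comp {g : C(Y, Z)} {f : C(X, Y)} (hg : IsMapUnderOver iY pY iZ pZ g)
    (hf : IsMapUnderOver iX pX iY pY f) : IsMapUnderOver iX pX iZ pZ (g.comp f) :=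
  ⟨fun a => (congrArg g (hf.apply_under a)).trans (hg.apply_under a),
    fun x => (hg.over_apply (f x)).trans (hf.over_apply x)⟩

theorem IsMapUnderOver.comp_homotopicWith {g : C(Y, Z)} (hg : IsMapUnderOver iY pY iZ pZ g)
    {f₀ f₁ : C(X, Y)} (h : f₀.HomotopicWith f₁ (IsMapUnderOver iX pX iY pY)) :
    (g.comp f₀).HomotopicWith (g.comp f₁) (IsMapUnderOver iX pX iZ pZ) := by
  obtain ⟨H⟩ := h
  exact ⟨⟨(ContinuousMap.Homotopy.refl g).comp H.toHomotopy, fun t => hg.comp (H.prop t)⟩⟩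

theorem IsMapUnderOver.homotopicWith_comp {f : C(X, Y)} (hf : IsMapUnderOver iX pX iY pY f)
    {g₀ g₁ : C(Y, Z)} (h : g₀.HomotopicWith g₁ (IsMapUnderOver iY pY iZ pZ)) :
    (g₀.comp f).HomotopicWith (g₁.comp f) (IsMapUnderOver iX pX iZ pZ) := by
  obtain ⟨H⟩ := h
  exact ⟨⟨H.toHomotopy.compContinuousMap f, fun t => (H.prop t).comp hf⟩⟩

theorem exists_cylinder_homotopy_of_homotopicWith {f₀ f₁ : C(X, Y)}
    (h : f₀.HomotopicWith f₁ (IsMapUnderOver iX pX iY pY)) :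
    ∃ H : C(X × I, Y), (∀ x, H (x, 0) = f₀ x) ∧ (∀ x, H (x, 1) = f₁ x) ∧
      (∀ a t, H (iX a, t) = iY a) ∧ ∀ x t, pY (H (x, t)) = pX x := by
  obtain ⟨H⟩ := h
  exact ⟨⟨fun z => H (z.2, z.1), by fun_prop⟩, H.apply_zero, H.apply_one,
    fun a t => (H.prop t).apply_under a, fun x t => (H.prop t).over_apply x⟩

theorem IsMapUnderOver.exists_rightInverse (hYi : IsHCofibration iY)
    (hpX : IsHurewiczFibration pX) (hpY : IsHurewiczFibration pY) {f : C(X, Y)}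
    (hf : IsMapUnderOver iX pX iY pY f) (he : IsHomotopyEquiv f) :
    ∃ g : C(Y, X), IsMapUnderOver iY pY iX pX g ∧
      (f.comp g).HomotopicWith (.id Y) (IsMapUnderOver iY pY iY pY) := by
  open FiberwisePathSpace in
  let τ : C(A, FiberwisePathSpace pX pY f) := lift iX ⟨fun z => iY z.1, by fun_prop⟩
    (fun a => (hf.apply_under a).symm) fun a _ => by
      exact hf.apply_under a ▸ hf.over_apply (iX a)
  obtain ⟨s, hs, hsτ⟩ := (isHurewiczFibration_endpoint hpX hpY
    hf.over_apply).exists_lift_extending_of_isHCofibration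
      (isHomotopyEquiv_endpoint hf.over_apply he) hYi τ (.id Y) fun _ => rfl
  have hbase : ∀ y, pX (base (s y)) = pY y := fun y =>
    (apply_eval (s y) 1).symm.trans (congrArg pY (hs y))
  refine ⟨base.comp s, ⟨fun a => congrArg base (hsτ a), hbase⟩,
    ⟨⟨⟨⟨fun z => eval (s z.2, z.1), by fun_prop⟩, fun y => eval_zero (s y), hs⟩,
      fun t => ⟨fun a => ?_, fun y => (apply_eval (s y) t).trans (hbase y)⟩⟩⟩⟩
  exact congrArg (fun n => eval (n, t)) (hsτ a)

end UnderOver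

theorem fiberwise_whitehead_general {A B X Y : Type*} [TopologicalSpace A] [TopologicalSpace B]
    [TopologicalSpace X] [TopologicalSpace Y] {iX : C(A, X)} {pX : C(X, B)} {iY : C(A, Y)}
    {pY : C(Y, B)} (hXi : IsHCofibration iX) (hYi : IsHCofibration iY)
    (hpX : IsHurewiczFibration pX) (hpY : IsHurewiczFibration pY) {f : C(X, Y)}
    (hf : IsMapUnderOver iX pX iY pY f) (he : IsHomotopyEquiv f) :
    ∃ g : C(Y, X), IsMapUnderOver iY pY iX pX g ∧
      (g.comp f).HomotopicWith (.id X) (IsMapUnderOver iX pX iX pX) ∧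
      (f.comp g).HomotopicWith (.id Y) (IsMapUnderOver iY pY iY pY) := by
  obtain ⟨g, hg, hfg⟩ := hf.exists_rightInverse hYi hpX hpY he
  have hge : IsHomotopyEquiv g := he.of_rightInverse (hfg.map fun H => H.toHomotopy)
  obtain ⟨f', hf', hgf'⟩ := hg.exists_rightInverse hXi hpY hpX hge
  have hff' : f.HomotopicWith f' (IsMapUnderOver iX pX iY pY) :=
    (hf.comp_homotopicWith hgf').symm.trans (hf'.homotopicWith_comp hfg)
  exact ⟨g, hg, (hg.comp_homotopicWith hff').trans hgf', hfg⟩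

/-- **Fiberwise Whitehead theorem.**  If `f : X → Y` is a map of retractive spaces over `B`
with h-cofibrant sections and Hurewicz-fibration projections, and `f` is a homotopy
equivalence of total spaces, then `f` is a fiberwise based homotopy equivalence: it has an
inverse `g` which is a map of retractive spaces, with both composites homotopic to the
identity through maps of retractive spaces over `B`. -/
theorem fiberwise_whitehead
    {B X Y : Type*} [TopologicalSpace B] [TopologicalSpace X] [TopologicalSpace Y]
    (iX : C(B, X)) (pX : C(X, B)) (hXr : ∀ b, pX (iX b) = b)
    (iY : C(B, Y)) (pY : C(Y, B)) (hYr : ∀ b, pY (iY b) = b)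
    (hXi : IsHCofibration iX) (hYi : IsHCofibration iY)
    (hpX : IsHurewiczFibration pX) (hpY : IsHurewiczFibration pY)
    (f : C(X, Y)) (hfi : ∀ b, f (iX b) = iY b) (hfp : ∀ x, pY (f x) = pX x)
    (hf : IsHomotopyEquiv f) :
    ∃ g : C(Y, X), (∀ b, g (iY b) = iX b) ∧ (∀ y, pX (g y) = pY y) ∧
      (∃ H : C(X × I, X),
        (∀ x, H (x, 0) = g (f x)) ∧ (∀ x, H (x, 1) = x) ∧
        (∀ b t, H (iX b, t) = iX b) ∧ ∀ x t, pX (H (x, t)) = pX x) ∧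
      (∃ K : C(Y × I, Y),
        (∀ y, K (y, 0) = f (g y)) ∧ (∀ y, K (y, 1) = y) ∧
        (∀ b t, K (iY b, t) = iY b) ∧ ∀ y t, pY (K (y, t)) = pY y) := by
  obtain ⟨g, hg, hgf, hfg⟩ := fiberwise_whitehead_general hXi hYi hpX hpY ⟨hfi, hfp⟩ hf
  exact ⟨g, hg.apply_under, hg.over_apply, exists_cylinder_homotopy_of_homotopicWith hgf,
    exists_cylinder_homotopy_of_homotopicWith hfg⟩
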